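/- Let K be a number field, f ∈ O_K[X] monic squarefree of odd degree at least 3, and S a finite set of nonzero primes of O_K such that O := O_{K,S} is a PID; let δ be a density on O. Let A, B, C ∈ O[X] with B² − A·C = f, [A,2B,C] primitive over O[X], A coprime to f in K[X], and assume [A,2B,C] is not in the principal genus over K[X], i.e. there exist no ε ∈ Kˣ and p ∈ K[X] with f dividing A − ε·p² in K[X]. Then δ(T_triv) = 0, where T_triv := {n ∈ O : [A(n), 2B(n), C(n)] is GL₂ᵗʷ-equivalent over O to the principal form [1, 0, −f(n)]}. -/

import Mathlib

open Polynomial IsDedekindDomain NumberField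

/-- The ring of `S`-integers of a number field `K`. -/
noncomputable abbrev SInt (K : Type*) [Field K] [NumberField K]
    (S : Finset (HeightOneSpectrum (𝓞 K))) : Type _ :=
  ((S : Set (HeightOneSpectrum (𝓞 K))).integer K)


/-- number of ideals of norm n -/
noncomputable def aF (F : Type*) [Field F] [NumberField F] (n : ℕ) : ℕ :=
  Nat.card {I : Ideal (𝓞 F) // Ideal.absNorm I = n}

lemma aF_one (F : Type*) [Field F] [NumberField F] : aF F 1 = 1 := by
  unfold aF
  simp [Ideal.absNorm_eq_one_iff]

lemma aF_mul (F : Type*) [Field F] [NumberField F] {m n : ℕ} (h : m.Coprime n)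
    : aF F (m * n) = aF F m * aF F n := by
  unfold aF
  rw [← Nat.card_prod]
  symm
  have key : ∀ {m n : ℕ}, m.Coprime n → ∀ I J : Ideal (𝓞 F), Ideal.absNorm I = m →
      Ideal.absNorm J = n → IsCoprime I J := by
    intro m n h I J hI hJ
    rw [Ideal.isCoprime_iff_exists]
    have hc : IsCoprime (m : ℤ) (n : ℤ) := Nat.isCoprime_iff_coprime.mpr h
    obtain ⟨a, b, hab⟩ := hc
    refine ⟨(a : 𝓞 F) * (m : 𝓞 F), ?_, (b : 𝓞 F) * (n : 𝓞 F), ?_, ?_⟩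
    · exact I.mul_mem_left _ (hI ▸ Ideal.absNorm_mem I)
    · exact J.mul_mem_left _ (hJ ▸ Ideal.absNorm_mem J)
    · exact_mod_cast congrArg (Int.cast : ℤ → 𝓞 F) hab
  refine Nat.card_congr (Equiv.ofBijective
    (fun x => ⟨x.1.1 * x.2.1, by rw [map_mul, x.1.2, x.2.2]⟩) ⟨?_, ?_⟩)
  · rintro ⟨⟨I, hI⟩, ⟨J, hJ⟩⟩ ⟨⟨I', hI'⟩, ⟨J', hJ'⟩⟩ hxy
    have hxy : I * J = I' * J' := congrArg Subtype.val hxy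
    have e1 : I = I' := by
      apply dvd_antisymm
      · exact (key h I J' hI hJ').dvd_of_dvd_mul_right (hxy ▸ dvd_mul_right I J)
      · exact (key h I' J hI' hJ).dvd_of_dvd_mul_right (hxy ▸ dvd_mul_right I' J')
    have e2 : J = J' := by
      apply dvd_antisymm
      · exact (key h I' J hI' hJ).symm.dvd_of_dvd_mul_left (hxy ▸ dvd_mul_left J I)
      · exact (key h I J' hI hJ').symm.dvd_of_dvd_mul_left (hxy ▸ dvd_mul_left J' I')
    subst e1; subst e2; rfl
  · rintro ⟨I, hI⟩
    have hmem : ((m : 𝓞 F) * (n : 𝓞 F)) ∈ I := by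
      have := Ideal.absNorm_mem I
      rw [hI] at this; exact_mod_cast this
    set J1 := I ⊔ Ideal.span {(m : 𝓞 F)} with hJ1
    set J2 := I ⊔ Ideal.span {(n : 𝓞 F)} with hJ2
    have hprod : J1 * J2 = I := by
      apply le_antisymm
      · rw [hJ1, hJ2, Ideal.sup_mul]
        refine sup_le Ideal.mul_le_left ?_
        rw [Ideal.mul_sup, Ideal.span_singleton_mul_span_singleton]
        refine sup_le Ideal.mul_le_right ?_
        rwa [Ideal.span_singleton_le_iff_mem]
      · intro x hx
        have hc : IsCoprime (m : ℤ) (n : ℤ) := Nat.isCoprime_iff_coprime.mpr h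
        obtain ⟨a, b, hab⟩ := hc
        have hab' : (a : 𝓞 F) * (m : 𝓞 F) + (b : 𝓞 F) * (n : 𝓞 F) = 1 := by
          exact_mod_cast congrArg (Int.cast : ℤ → 𝓞 F) hab
        have hx1 : x ∈ J1 := Ideal.mem_sup_left hx
        have hx2 : x ∈ J2 := Ideal.mem_sup_left hx
        have h1 : (m : 𝓞 F) ∈ J1 := Ideal.mem_sup_right (Ideal.mem_span_singleton_self _)
        have h2 : (n : 𝓞 F) ∈ J2 := Ideal.mem_sup_right (Ideal.mem_span_singleton_self _)
        have : x = a * (m * x) + b * (x * n) := by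
          linear_combination (-x) * hab'
        rw [this]
        exact Ideal.add_mem _ (Ideal.mul_mem_left _ _ (Ideal.mul_mem_mul h1 hx2))
          (Ideal.mul_mem_left _ _ (Ideal.mul_mem_mul hx1 h2))
    have hN : Ideal.absNorm J1 * Ideal.absNorm J2 = m * n := by rw [← map_mul, hprod, hI]
    have d1 : Ideal.absNorm J1 ∣ m ^ Module.finrank ℤ (𝓞 F) := by
      rw [← Ideal.absNorm_span_natCast]
      exact Ideal.absNorm_dvd_absNorm_of_le le_sup_right
    have d2 : Ideal.absNorm J2 ∣ n ^ Module.finrank ℤ (𝓞 F) := by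
      rw [← Ideal.absNorm_span_natCast]
      exact Ideal.absNorm_dvd_absNorm_of_le le_sup_right
    have c1 : (Ideal.absNorm J1).Coprime n := Nat.Coprime.coprime_dvd_left d1 (h.pow_left _)
    have c2 : (Ideal.absNorm J2).Coprime m := Nat.Coprime.coprime_dvd_left d2 (h.symm.pow_left _)
    have e1 : Ideal.absNorm J1 ∣ m := c1.dvd_of_dvd_mul_right (hN ▸ dvd_mul_right _ _)
    have e2 : Ideal.absNorm J2 ∣ n := c2.dvd_of_dvd_mul_left (hN ▸ dvd_mul_left _ _)
    have f1 : m ∣ Ideal.absNorm J1 := c2.symm.dvd_of_dvd_mul_right (hN ▸ dvd_mul_right _ _)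
    have f2 : n ∣ Ideal.absNorm J2 := c1.symm.dvd_of_dvd_mul_left (hN ▸ dvd_mul_left _ _)
    exact ⟨⟨⟨J1, Nat.dvd_antisymm e1 f1⟩, ⟨J2, Nat.dvd_antisymm e2 f2⟩⟩, Subtype.ext hprod⟩

lemma aF_prime_pow_le (F : Type*) [Field F] [NumberField F] {p : ℕ} (hp : p.Prime) (k : ℕ) :
    aF F (p ^ k) ≤ (k * Module.finrank ℤ (𝓞 F) + 1) ^ Module.finrank ℤ (𝓞 F) := by
  classical
  set d := Module.finrank ℤ (𝓞 F)
  set P : Ideal (𝓞 F) := Ideal.span {(p : 𝓞 F)} with hP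
  have hP0 : P ≠ 0 := by
    rw [hP, Ne, Ideal.zero_eq_bot, Ideal.span_singleton_eq_bot]
    exact_mod_cast hp.ne_zero
  set Q := UniqueFactorizationMonoid.normalizedFactors P with hQ
  have hQprod : Q.prod = P := associated_iff_eq.mp
    (UniqueFactorizationMonoid.prod_normalizedFactors hP0)
  have hcard : Q.card ≤ d := by
    have h1 : (Q.map Ideal.absNorm).prod = p ^ d := by
      rw [← map_multiset_prod, hQprod, hP, Ideal.absNorm_span_natCast]
    have h2 : ∀ x ∈ Q.map Ideal.absNorm, p ≤ x := by
      intro x hx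
      obtain ⟨I, hI, rfl⟩ := Multiset.mem_map.mp hx
      have hdvd : Ideal.absNorm I ∣ p ^ d := h1 ▸ Multiset.dvd_prod hx
      have hne : Ideal.absNorm I ≠ 1 := by
        intro h
        have := (UniqueFactorizationMonoid.prime_of_normalized_factor I hI).not_isUnit
        rw [Ideal.absNorm_eq_one_iff] at h
        exact this (by rw [h, ← Ideal.one_eq_top]; exact isUnit_one)
      obtain ⟨j, -, hj⟩ := (Nat.dvd_prime_pow hp).mp hdvd
      rw [hj] at hne ⊢
      exact Nat.le_self_pow (by rintro rfl; simp at hne) p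
    have h3 := Multiset.pow_card_le_prod h2
    rw [h1, Multiset.card_map] at h3
    exact (Nat.pow_le_pow_iff_right hp.one_lt).mp h3
  let g : {I : Ideal (𝓞 F) // Ideal.absNorm I = p ^ k} → (Q.toFinset → Fin (k * d + 1)) :=
    fun I q => Fin.ofNat (k * d + 1) ((UniqueFactorizationMonoid.normalizedFactors I.1).count q.1)
  have hle : ∀ I : {I : Ideal (𝓞 F) // Ideal.absNorm I = p ^ k},
      I.1 ≠ 0 ∧ UniqueFactorizationMonoid.normalizedFactors I.1 ≤ k • Q := by
    rintro ⟨I, hI⟩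
    have h0 : I ≠ 0 := by
      rintro rfl
      simp at hI
      exact pow_ne_zero k hp.ne_zero hI.symm
    refine ⟨h0, ?_⟩
    have hd : I ∣ P ^ k := by
      rw [Ideal.dvd_iff_le, hP, Ideal.span_singleton_pow, Ideal.span_singleton_le_iff_mem]
      have := Ideal.absNorm_mem I
      rw [hI] at this; exact_mod_cast this
    rw [UniqueFactorizationMonoid.dvd_iff_normalizedFactors_le_normalizedFactors h0
      (pow_ne_zero _ hP0), UniqueFactorizationMonoid.normalizedFactors_pow] at hd
    exact hd
  have hinj : Function.Injective g := by
    intro I J hIJ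
    apply Subtype.ext
    have : UniqueFactorizationMonoid.normalizedFactors I.1 =
        UniqueFactorizationMonoid.normalizedFactors J.1 := by
      ext q
      have bound : ∀ I : {I : Ideal (𝓞 F) // Ideal.absNorm I = p ^ k},
          (UniqueFactorizationMonoid.normalizedFactors I.1).count q ≤ k * Q.count q := by
        intro I
        have := Multiset.count_le_of_le q (hle I).2
        rwa [Multiset.count_nsmul] at this
      by_cases hq : q ∈ Q
      · have := congrArg Fin.val (congrFun hIJ ⟨q, Multiset.mem_toFinset.mpr hq⟩)
        have hb : k * Q.count q ≤ k * d :=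
          Nat.mul_le_mul_left _ ((Multiset.count_le_card _ _).trans hcard)
        simp only [g, Fin.ofNat] at this
        rwa [Nat.mod_eq_of_lt (by have := bound I; omega),
          Nat.mod_eq_of_lt (by have := bound J; omega)] at this
      · have h0 : Q.count q = 0 := Multiset.count_eq_zero.mpr hq
        have b1 := bound I
        have b2 := bound J
        rw [h0] at b1 b2
        omega
    rw [← associated_iff_eq.mp (UniqueFactorizationMonoid.prod_normalizedFactors (hle I).1), this,
      associated_iff_eq.mp (UniqueFactorizationMonoid.prod_normalizedFactors (hle J).1)]
  have := Nat.card_le_card_of_injective g hinj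
  refine this.trans ?_
  rw [Nat.card_fun, Nat.card_fin, Nat.card_eq_fintype_card, Fintype.card_coe]
  exact Nat.pow_le_pow_right (by omega) ((Multiset.toFinset_card_le Q).trans hcard)
open Filter Topology in
lemma aF_summable (F : Type*) [Field F] [NumberField F] {s : ℝ} (hs : 1 < s) :
    Summable (fun n : ℕ => (aF F n : ℝ) * (n : ℝ) ^ (-s)) := by
  have h1 : LSeriesSummable (fun n ↦ ((aF F n : ℝ) : ℂ)) s := by
    refine LSeriesSummable_of_sum_norm_bigO_and_nonneg (r := 1) ?_ (fun n => Nat.cast_nonneg _)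
      zero_le_one (by simpa using hs)
    have : Tendsto (fun n : ℕ ↦ (∑ k ∈ Finset.Icc 1 n, (aF F k : ℝ)) / (n : ℝ)) atTop
        (𝓝 (dedekindZeta_residue F)) := by
      refine ((NumberField.Ideal.tendsto_norm_le_div_atTop₀ F).comp tendsto_natCast_atTop_atTop).congr
        fun n ↦ ?_
      simp only [Function.comp_apply, Nat.cast_le, ← Nat.cast_sum]
      congr
      rw [← add_left_inj 1, ← Ideal.card_norm_le_eq_card_norm_le_add_one,
        show Finset.Icc 1 n = Finset.Ioc 0 n from Finset.Icc_succ_left_eq_Ioc _ _,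
        show 1 = aF F 0 by simp [aF, Ideal.absNorm_eq_zero_iff],
        Finset.sum_Ioc_add_eq_sum_Icc (n.zero_le)]
      unfold aF
      rw [← Finset.card_preimage_eq_sum_card_image_eq
          (fun k _ ↦ Ideal.finite_setOfPred_absNorm_eq k)]
      simp [Set.coe_eq_subtype]
    exact Asymptotics.isBigO_atTop_natCast_rpow_of_tendsto_div_rpow (by simpa using this)
  have h2 := h1.norm
  refine h2.congr fun n => ?_
  rcases eq_or_ne n 0 with rfl | hn
  · simp [Real.zero_rpow (show -s ≠ 0 by linarith)]
  · rw [LSeries.norm_term_eq]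
    simp [hn, Real.rpow_neg, div_eq_mul_inv]

lemma zeta_eq (F : Type*) [Field F] [NumberField F] {s : ℝ} (hs : 1 < s) :
    dedekindZeta F s = ((∑' n : ℕ, (aF F n : ℝ) * (n : ℝ) ^ (-s) : ℝ) : ℂ) := by
  rw [dedekindZeta, LSeries, Complex.ofReal_tsum]
  refine tsum_congr fun n => ?_
  rcases eq_or_ne n 0 with rfl | hn
  · simp [Real.zero_rpow (show -s ≠ 0 by linarith)]
  · rw [LSeries.term_of_ne_zero hn, Complex.ofReal_mul, Complex.ofReal_cpow (by positivity)]
    simp [Complex.cpow_neg, div_eq_mul_inv, aF]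

open Filter Topology in
lemma zeta_tendsto (F : Type*) [Field F] [NumberField F] :
    Tendsto (fun s : ℝ => (s - 1) * ∑' n : ℕ, (aF F n : ℝ) * (n : ℝ) ^ (-s)) (𝓝[>] 1)
      (𝓝 (dedekindZeta_residue F)) := by
  have h := tendsto_sub_one_mul_dedekindZeta_nhdsGT F
  have h2 := (Complex.continuous_re.tendsto _).comp h
  refine h2.congr' ?_
  filter_upwards [self_mem_nhdsWithin] with s hs
  rw [Function.comp_apply, zeta_eq F hs, ← Complex.ofReal_one, ← Complex.ofReal_sub,
    ← Complex.ofReal_mul, Complex.ofReal_re]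

lemma aF_tail (F : Type*) [Field F] [NumberField F] : ∃ C : ℝ, 0 ≤ C ∧ ∀ s : ℝ, 1 < s →
    ∀ p : Nat.Primes, |Real.log (∑' e : ℕ, (aF F ((p : ℕ) ^ e) : ℝ) * (((p : ℕ) ^ e : ℕ) : ℝ) ^ (-s)) -
      (aF F p : ℝ) * (p : ℝ) ^ (-s)| ≤ C * ((p : ℕ) : ℝ) ^ (-2 : ℝ) ∧
      0 < ∑' e : ℕ, (aF F ((p : ℕ) ^ e) : ℝ) * (((p : ℕ) ^ e : ℕ) : ℝ) ^ (-s) := by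
  set d := Module.finrank ℤ (𝓞 F)
  have hsum0 : Summable (fun e : ℕ => (((e + 2) * d + 1 : ℕ) : ℝ) ^ d * (1 / 2 : ℝ) ^ e) := by
    have h := summable_pow_mul_geometric_of_norm_lt_one (R := ℝ) d (r := 1 / 2)
      (by rw [Real.norm_eq_abs, abs_of_pos] <;> norm_num)
    have h := ((summable_nat_add_iff 2).mpr h).mul_left (4 * ((d : ℝ) + 1) ^ d)
    refine Summable.of_nonneg_of_le (fun e => by positivity) (fun e => ?_) h
    have : (((e + 2) * d + 1 : ℕ) : ℝ) ≤ ((d : ℝ) + 1) * ((e + 2 : ℕ) : ℝ) := by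
      push_cast; nlinarith [(Nat.cast_nonneg e : (0:ℝ) ≤ e)]
    calc (((e + 2) * d + 1 : ℕ) : ℝ) ^ d * (1 / 2 : ℝ) ^ e
        ≤ (((d : ℝ) + 1) * ((e + 2 : ℕ) : ℝ)) ^ d * (1 / 2 : ℝ) ^ e := by gcongr
      _ = _ := by rw [mul_pow, pow_add]; ring
  set C0 := ∑' e : ℕ, (((e + 2) * d + 1 : ℕ) : ℝ) ^ d * (1 / 2 : ℝ) ^ e with hC0
  have hC0' : 0 ≤ C0 := tsum_nonneg fun e => by positivity
  refine ⟨C0 + ((d + 1 : ℕ) : ℝ) ^ (2 * d), by positivity, fun s hs p => ?_⟩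
  have hp : (2 : ℝ) ≤ (p : ℕ) := by exact_mod_cast p.2.two_le
  have hp0 : (0 : ℝ) < (p : ℕ) := by linarith
  set g : ℕ → ℝ := fun e => (aF F ((p : ℕ) ^ e) : ℝ) * (((p : ℕ) ^ e : ℕ) : ℝ) ^ (-s) with hg
  have hgs : Summable g :=
    (aF_summable F hs).comp_injective (Nat.pow_right_injective p.2.two_le)
  have hg0 : ∀ e, 0 ≤ g e := fun e => by positivity
  set y : ℝ := (aF F p : ℝ) * (p : ℝ) ^ (-s) with hy
  have hy0 : 0 ≤ y := by positivity
  set r : ℝ := ∑' e, g (e + 2) with hr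
  have hr0 : 0 ≤ r := tsum_nonneg fun e => hg0 _
  have hsplit : ∑' e, g e = 1 + y + r := by
    rw [← hgs.sum_add_tsum_nat_add 2, Finset.sum_range_succ, Finset.sum_range_one]
    simp [hg, hy, aF_one, hr]
  have hgle : ∀ e, g (e + 2) ≤ ((p : ℕ) : ℝ) ^ (-2 : ℝ) *
      ((((e + 2) * d + 1 : ℕ) : ℝ) ^ d * (1 / 2 : ℝ) ^ e) := by
    intro e
    have h1 : (aF F ((p : ℕ) ^ (e + 2)) : ℝ) ≤ (((e + 2) * d + 1 : ℕ) : ℝ) ^ d := by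
      exact_mod_cast aF_prime_pow_le F p.2 (e + 2)
    have h2 : (((p : ℕ) ^ (e + 2) : ℕ) : ℝ) ^ (-s) ≤ ((p : ℕ) : ℝ) ^ (-2 : ℝ) * (1 / 2 : ℝ) ^ e := by
      calc (((p : ℕ) ^ (e + 2) : ℕ) : ℝ) ^ (-s) ≤ (((p : ℕ) ^ (e + 2) : ℕ) : ℝ) ^ (-1 : ℝ) := by
            apply Real.rpow_le_rpow_of_exponent_le
            · exact_mod_cast Nat.one_le_pow _ _ p.2.pos
            · linarith
        _ = ((p : ℕ) : ℝ) ^ (-2 : ℝ) * ((1 : ℝ) / (p : ℕ)) ^ e := by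
            rw [Real.rpow_neg_one, Real.rpow_neg hp0.le, show (2 : ℝ) = ((2 : ℕ) : ℝ) by norm_num,
              Real.rpow_natCast]
            push_cast
            rw [pow_add, one_div, inv_pow, mul_inv, mul_comm]
        _ ≤ _ := by gcongr
    calc g (e + 2) ≤ (((e + 2) * d + 1 : ℕ) : ℝ) ^ d * (((p : ℕ) : ℝ) ^ (-2 : ℝ) * (1 / 2 : ℝ) ^ e) := by
          simp only [hg]; gcongr
      _ = _ := by ring
  have hrle : r ≤ C0 * ((p : ℕ) : ℝ) ^ (-2 : ℝ) := by
    rw [mul_comm, hC0, ← tsum_mul_left]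
    exact Summable.tsum_le_tsum hgle ((summable_nat_add_iff 2).mpr hgs) (hsum0.mul_left _)
  have hyle : y ≤ ((d + 1 : ℕ) : ℝ) ^ d * ((p : ℕ) : ℝ) ^ (-1 : ℝ) := by
    have h1 : (aF F (p : ℕ) : ℝ) ≤ ((d + 1 : ℕ) : ℝ) ^ d := by
      have := aF_prime_pow_le F p.2 1
      simp only [pow_one, one_mul] at this
      exact_mod_cast this
    have h2 : ((p : ℕ) : ℝ) ^ (-s) ≤ ((p : ℕ) : ℝ) ^ (-1 : ℝ) := by
      apply Real.rpow_le_rpow_of_exponent_le <;> linarith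
    simp only [hy]; gcongr
  have hy2 : y ^ 2 ≤ ((d + 1 : ℕ) : ℝ) ^ (2 * d) * ((p : ℕ) : ℝ) ^ (-2 : ℝ) := by
    calc y ^ 2 ≤ (((d + 1 : ℕ) : ℝ) ^ d * ((p : ℕ) : ℝ) ^ (-1 : ℝ)) ^ 2 := by gcongr
      _ = _ := by
        rw [mul_pow, ← pow_mul, mul_comm d 2, ← Real.rpow_natCast (((p : ℕ) : ℝ) ^ (-1 : ℝ)),
          ← Real.rpow_mul hp0.le]
        norm_num
  have hpp : 0 ≤ ((p : ℕ) : ℝ) ^ (-2 : ℝ) := by positivity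
  rw [hsplit]
  refine ⟨?_, by linarith⟩
  have up : Real.log (1 + y + r) ≤ y + r := by
    have := Real.log_le_sub_one_of_pos (show 0 < 1 + y + r by linarith); linarith
  have lo : y - y ^ 2 ≤ Real.log (1 + y + r) := by
    have h1 : Real.log (1 + y) ≤ Real.log (1 + y + r) :=
      Real.log_le_log (by linarith) (by linarith)
    have h2 := Real.one_sub_inv_le_log_of_pos (show 0 < 1 + y by linarith)
    have h3 : y - y ^ 2 ≤ 1 - (1 + y)⁻¹ := by
      have : 1 - (1 + y)⁻¹ = y / (1 + y) := by field_simp; ring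
      rw [this, le_div_iff₀ (by linarith)]
      nlinarith [pow_nonneg hy0 3]
    linarith
  rw [abs_le]
  have e1 : 0 ≤ C0 * ((p : ℕ) : ℝ) ^ (-2 : ℝ) := by positivity
  have e2 : 0 ≤ ((d + 1 : ℕ) : ℝ) ^ (2 * d) * ((p : ℕ) : ℝ) ^ (-2 : ℝ) := by positivity
  rw [add_mul]
  constructor <;> linarith

lemma aF_prime_summable (F : Type*) [Field F] [NumberField F] {s : ℝ} (hs : 1 < s) :
    Summable (fun p : Nat.Primes => (aF F p : ℝ) * ((p : ℕ) : ℝ) ^ (-s)) :=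
  (aF_summable F hs).comp_injective (i := fun p : Nat.Primes => (p : ℕ)) Subtype.val_injective

open Filter Topology in
lemma prime_sum_bound (F : Type*) [Field F] [NumberField F] : ∃ C : ℝ, ∀ᶠ s : ℝ in 𝓝[>] 1,
    |∑' p : Nat.Primes, (aF F p : ℝ) * ((p : ℕ) : ℝ) ^ (-s) - Real.log (1 / (s - 1))| ≤ C := by
  obtain ⟨C, hC0, hC⟩ := aF_tail F
  set ρ := dedekindZeta_residue F with hρ
  have hρ0 : 0 < ρ := dedekindZeta_residue_pos F
  have hlog : Tendsto (fun s : ℝ => Real.log ((s - 1) * ∑' n : ℕ, (aF F n : ℝ) * (n : ℝ) ^ (-s)))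
      (𝓝[>] 1) (𝓝 (Real.log ρ)) := (zeta_tendsto F).log hρ0.ne'
  have hP2 : Summable (fun p : Nat.Primes => ((p : ℕ) : ℝ) ^ (-2 : ℝ)) :=
    (Real.summable_nat_rpow.mpr (by norm_num)).comp_injective
      (i := fun p : Nat.Primes => (p : ℕ)) Subtype.val_injective
  refine ⟨C * ∑' p : Nat.Primes, ((p : ℕ) : ℝ) ^ (-2 : ℝ) + (|Real.log ρ| + 1), ?_⟩
  have hev := hlog.eventually (Metric.ball_mem_nhds _ one_pos)
  filter_upwards [hev, self_mem_nhdsWithin] with s hs1 hs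
  have hs : 1 < s := hs
  rw [Real.dist_eq] at hs1
  have hprod : HasProd (fun p : Nat.Primes ↦ ∑' e : ℕ,
      (aF F ((p : ℕ) ^ e) : ℝ) * (((p : ℕ) ^ e : ℕ) : ℝ) ^ (-s))
      (∑' n : ℕ, (aF F n : ℝ) * (n : ℝ) ^ (-s)) := by
    refine EulerProduct.eulerProduct_hasProd (f := fun n : ℕ => (aF F n : ℝ) * (n : ℝ) ^ (-s))
      (by simp [aF_one]) ?_ (aF_summable F hs).norm ?_
    · intro m n hmn
      rw [aF_mul F hmn]
      push_cast
      rw [Real.mul_rpow (by positivity) (by positivity)]; ring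
    · simp [Real.zero_rpow (show -s ≠ 0 by linarith)]
  have hZ : 1 ≤ ∑' n : ℕ, (aF F n : ℝ) * (n : ℝ) ^ (-s) := by
    have := (aF_summable F hs).le_tsum 1 (fun j _ => by positivity)
    simpa [aF_one] using this
  set Z := ∑' n : ℕ, (aF F n : ℝ) * (n : ℝ) ^ (-s) with hZdef
  have hsumlog : HasSum (fun p : Nat.Primes ↦ Real.log (∑' e : ℕ,
      (aF F ((p : ℕ) ^ e) : ℝ) * (((p : ℕ) ^ e : ℕ) : ℝ) ^ (-s))) (Real.log Z) := by
    have h1 : Tendsto _ _ _ := hprod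
    have h2 := h1.log (by linarith)
    refine h2.congr fun t => ?_
    exact Real.log_prod (fun p _ => (hC s hs p).2.ne')
  have hdiff := hsumlog.sub (aF_prime_summable F hs).hasSum
  have hb : |Real.log Z - ∑' p : Nat.Primes, (aF F p : ℝ) * ((p : ℕ) : ℝ) ^ (-s)| ≤
      C * ∑' p : Nat.Primes, ((p : ℕ) : ℝ) ^ (-2 : ℝ) := by
    rw [← hdiff.tsum_eq, ← Real.norm_eq_abs]
    refine tsum_of_norm_bounded (hP2.hasSum.mul_left C) fun p => ?_
    rw [Real.norm_eq_abs]
    exact (hC s hs p).1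
  rw [Real.log_mul (by linarith) (by linarith)] at hs1
  rw [one_div, Real.log_inv]
  have h3 := abs_le.mp hb
  have h4 := abs_lt.mp hs1
  have h5 := neg_abs_le (Real.log ρ)
  have h6 := le_abs_self (Real.log ρ)
  rw [abs_le]
  constructor <;> linarith [h3.1, h3.2, h4.1, h4.2]

lemma hom_zmod_surj {R : Type*} [CommRing R] {p : ℕ} (hp : p.Prime) (φ : R →+* ZMod p) :
    Function.Surjective φ := by
  have : Fact p.Prime := ⟨hp⟩
  intro z
  exact ⟨((z.val : ℕ) : R), by rw [map_natCast, ZMod.natCast_zmod_val]⟩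

lemma aF_eq_hom (F : Type*) [Field F] [NumberField F] {p : ℕ} (hp : p.Prime) :
    aF F p = Nat.card (𝓞 F →+* ZMod p) ∧ Finite (𝓞 F →+* ZMod p) := by
  have : Fact p.Prime := ⟨hp⟩
  have hker : ∀ φ : 𝓞 F →+* ZMod p, Ideal.absNorm (RingHom.ker φ) = p := by
    intro φ
    rw [Ideal.absNorm_apply, Submodule.cardQuot_apply]
    have e := RingHom.quotientKerEquivOfSurjective (hom_zmod_surj hp φ)
    exact (Nat.card_congr e.toEquiv).trans (Nat.card_zmod p)
  let g : (𝓞 F →+* ZMod p) → {I : Ideal (𝓞 F) // Ideal.absNorm I = p} :=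
    fun φ => ⟨RingHom.ker φ, hker φ⟩
  have hinj : Function.Injective g := by
    intro φ ψ h
    have h : RingHom.ker φ = RingHom.ker ψ := congrArg Subtype.val h
    ext x
    have h1 : x - (((φ x).val : ℕ) : 𝓞 F) ∈ RingHom.ker φ := by
      rw [RingHom.mem_ker, map_sub, map_natCast, ZMod.natCast_zmod_val, sub_self]
    rw [h, RingHom.mem_ker, map_sub, map_natCast, ZMod.natCast_zmod_val, sub_eq_zero] at h1
    exact h1.symm
  have hsurj : Function.Surjective g := by
    rintro ⟨I, hI⟩
    have hI' := hI
    rw [Ideal.absNorm_apply, Submodule.cardQuot_apply] at hI'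
    have : Finite (𝓞 F ⧸ I) := Nat.finite_of_card_ne_zero (by
      intro h; exact hp.ne_zero (hI'.symm.trans h))
    have : Fintype (𝓞 F ⧸ I) := Fintype.ofFinite _
    let e : ZMod p ≃+* (𝓞 F ⧸ I) := ZMod.ringEquivOfPrime _ hp
      (by rw [← Nat.card_eq_fintype_card]; exact hI')
    refine ⟨e.symm.toRingHom.comp (Ideal.Quotient.mk I), Subtype.ext ?_⟩
    ext x
    simp [g, RingHom.mem_ker, Ideal.Quotient.eq_zero_iff_mem]
  have hfin : Finite {I : Ideal (𝓞 F) // Ideal.absNorm I = p} :=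
    (Ideal.finite_setOfPred_absNorm_eq p).to_subtype
  exact ⟨(Nat.card_congr (Equiv.ofBijective g ⟨hinj, hsurj⟩)).symm, Finite.of_injective g hinj⟩

lemma hom_ext_away {A T E : Type*} [CommRing A] [CommRing T] [Field E] (i : A →+* T)
    (hi : Function.Injective i) (φ : A →+* E) (N : A) (hN : φ N ≠ 0)
    (h : ∀ y : T, ∃ k : ℕ, ∃ a : A, i N ^ k * y = i a) :
    ∃ ψ : T →+* E, ∀ a, ψ (i a) = φ a := by
  choose k a hka using h
  let g : T → E := fun y => φ (a y) / φ N ^ k y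
  have key : ∀ (y : T) (l : ℕ) (b : A), i N ^ l * y = i b → g y = φ b / φ N ^ l := by
    intro y l b hb
    have h1 : N ^ l * a y = N ^ k y * b := by
      apply hi
      rw [map_mul, map_mul, map_pow, map_pow, ← hka, ← hb]; ring
    have h2 := congrArg φ h1
    rw [map_mul, map_mul, map_pow, map_pow] at h2
    simp only [g]
    rw [div_eq_div_iff (pow_ne_zero _ hN) (pow_ne_zero _ hN)]
    linear_combination h2
  refine ⟨{ toFun := g, map_one' := ?_, map_mul' := ?_, map_zero' := ?_, map_add' := ?_ }, ?_⟩
  · rw [key 1 0 1 (by simp)]; simp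
  · intro x y
    rw [key (x * y) (k x + k y) (a x * a y) (by rw [map_mul, ← hka, ← hka]; ring)]
    simp only [g, map_mul]
    field_simp
    ring
  · rw [key 0 0 0 (by simp)]; simp
  · intro x y
    rw [key (x + y) (k x + k y) (N ^ k y * a x + N ^ k x * a y)
      (by rw [map_add, map_mul, map_mul, map_pow, map_pow, ← hka, ← hka]; ring)]
    simp only [g, map_mul, map_add, map_pow]
    field_simp
    ring
  · intro b
    change g (i b) = _
    rw [key (i b) 0 b (by simp)]; simp

lemma half_count (L M : Type*) [Field L] [NumberField L] [Field M] [NumberField M] [Algebra L M]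
    (α : 𝓞 L) (hα : α ≠ 0) (β : 𝓞 M) (hβ : β * β = algebraMap (𝓞 L) (𝓞 M) α)
    (hgen : ∀ m : M, ∃ u v : L, m = algebraMap L M u + algebraMap L M v * β)
    (hns : ∀ l : L, (β : M) ≠ algebraMap L M l) :
    ∃ N : ℕ, N ≠ 0 ∧ ∀ p : ℕ, p.Prime → ¬ p ∣ N →
      2 * Nat.card {φ : 𝓞 L →+* ZMod p // IsSquare (φ α)} ≤ Nat.card (𝓞 M →+* ZMod p) := by
  classical
  have hmulL : ∀ u : L, ∃ n : ℤ, n ≠ 0 ∧ ∃ w : 𝓞 L, (w : L) = n * u := by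
    intro u
    have halg : IsAlgebraic ℤ u :=
      (IsFractionRing.isAlgebraic_iff ℤ ℚ L).mpr (Algebra.IsAlgebraic.isAlgebraic u)
    obtain ⟨y, hy, hIntg⟩ := halg.exists_integral_multiple
    exact ⟨y, hy, ⟨y • u, hIntg⟩, by simp⟩
  have hmulM : ∀ x : 𝓞 M, ∃ n : ℤ, n ≠ 0 ∧ ∃ u v : 𝓞 L,
      (n : 𝓞 M) * x = algebraMap (𝓞 L) (𝓞 M) u + algebraMap (𝓞 L) (𝓞 M) v * β := by
    intro x
    obtain ⟨u, v, huv⟩ := hgen x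
    obtain ⟨n, hn, u', hu'⟩ := hmulL u
    obtain ⟨m, hm, v', hv'⟩ := hmulL v
    refine ⟨n * m, mul_ne_zero hn hm, m * u', n * v', ?_⟩
    apply RingOfIntegers.ext
    have e1 : ((algebraMap (𝓞 L) (𝓞 M) u' : 𝓞 M) : M) = n * algebraMap L M u := by
      rw [← map_intCast (algebraMap L M) n, ← map_mul, ← hu']; rfl
    have e2 : ((algebraMap (𝓞 L) (𝓞 M) v' : 𝓞 M) : M) = m * algebraMap L M v := by
      rw [← map_intCast (algebraMap L M) m, ← map_mul, ← hv']; rfl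
    simp only [map_mul, map_add, map_intCast, Int.cast_mul]
    rw [show algebraMap (𝓞 M) M x = _ from huv,
      show algebraMap (𝓞 M) M (algebraMap (𝓞 L) (𝓞 M) u') = _ from e1,
      show algebraMap (𝓞 M) M (algebraMap (𝓞 L) (𝓞 M) v') = _ from e2]
    ring
  obtain ⟨n, hn, hnM⟩ : ∃ n : ℤ, n ≠ 0 ∧ ∀ x : 𝓞 M, ∃ u v : 𝓞 L,
      (n : 𝓞 M) * x = algebraMap (𝓞 L) (𝓞 M) u + algebraMap (𝓞 L) (𝓞 M) v * β := by
    obtain ⟨s, hs⟩ := (inferInstance : Module.Finite ℤ (𝓞 M)).fg_top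
    choose c hc hcM using hmulM
    refine ⟨∏ x ∈ s, c x, Finset.prod_ne_zero_iff.mpr fun x _ => hc x, fun x => ?_⟩
    have hx : x ∈ Submodule.span ℤ (s : Set (𝓞 M)) := hs ▸ Submodule.mem_top
    induction hx using Submodule.span_induction with
    | mem x hx =>
      obtain ⟨u, v, huv⟩ := hcM x
      rw [← Finset.mul_prod_erase s c hx]
      refine ⟨(∏ y ∈ s.erase x, c y : ℤ) * u, (∏ y ∈ s.erase x, c y : ℤ) * v, ?_⟩
      simp only [map_mul, map_intCast, Int.cast_mul]
      linear_combination ((∏ y ∈ s.erase x, c y : ℤ) : 𝓞 M) * huv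
    | zero => exact ⟨0, 0, by simp⟩
    | add x y _ _ hx hy =>
      obtain ⟨u, v, huv⟩ := hx
      obtain ⟨u', v', huv'⟩ := hy
      exact ⟨u + u', v + v', by simp only [map_add]; linear_combination huv + huv'⟩
    | smul a x _ hx =>
      obtain ⟨u, v, huv⟩ := hx
      refine ⟨a * u, a * v, ?_⟩
      simp only [map_mul, map_intCast, zsmul_eq_mul]
      linear_combination (a : 𝓞 M) * huv
  set Nα := Ideal.absNorm (Ideal.span {α}) with hNα
  have hNα0 : Nα ≠ 0 := by
    rw [hNα, Ne, Ideal.absNorm_eq_zero_iff, Ideal.span_singleton_eq_bot]; exact hα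
  refine ⟨2 * Nα * n.natAbs, by simp [hNα0, hn], fun p hp hpN => ?_⟩
  have : Fact p.Prime := ⟨hp⟩
  have hfinM := (aF_eq_hom M hp).2
  have hp2 : (2 : ZMod p) ≠ 0 := by
    intro h
    have : ((2 : ℕ) : ZMod p) = 0 := by exact_mod_cast h
    rw [ZMod.natCast_eq_zero_iff] at this
    exact hpN ((this.mul_right _).mul_right _)
  have hpα : ∀ φ : 𝓞 L →+* ZMod p, φ α ≠ 0 := by
    intro φ h
    have hm := Ideal.absNorm_mem (Ideal.span {α})
    rw [← hNα, Ideal.mem_span_singleton] at hm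
    obtain ⟨c, hc⟩ := hm
    have := congrArg φ hc
    rw [map_mul, h, zero_mul, map_natCast, ZMod.natCast_eq_zero_iff] at this
    exact hpN ((this.mul_left _).mul_right _)
  have hpn : ((n : ℤ) : ZMod p) ≠ 0 := by
    intro h
    rw [ZMod.intCast_zmod_eq_zero_iff_dvd] at h
    exact hpN ((Int.natCast_dvd.mp h).mul_left _)
  -- the order
  let i : QuadraticAlgebra (𝓞 L) α 0 →ₐ[𝓞 L] 𝓞 M :=
    QuadraticAlgebra.lift ⟨β, by rw [hβ]; simp [Algebra.algebraMap_eq_smul_one]⟩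
  have hi : ∀ z, i z = algebraMap (𝓞 L) (𝓞 M) z.re + algebraMap (𝓞 L) (𝓞 M) z.im * β := by
    intro z
    simp [i, Algebra.smul_def]
  have hinj : Function.Injective i.toRingHom := by
    rw [injective_iff_map_eq_zero]
    intro z hz
    have hz : i z = 0 := hz
    rw [hi] at hz
    have hz' : algebraMap L M z.re + algebraMap L M z.im * (β : M) = 0 := by
      have := congrArg (algebraMap (𝓞 M) M) hz
      simpa [← IsScalarTower.algebraMap_apply] using this
    have him : z.im = 0 := by
      by_contra hne
      have hne' : (z.im : L) ≠ 0 := by simpa using hne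
      apply hns (-(z.re : L) / z.im)
      rw [map_div₀, map_neg, eq_div_iff (by simpa using hne')]
      linear_combination hz'
    have hre : z.re = 0 := by
      rw [him] at hz'
      simpa using hz'
    exact QuadraticAlgebra.ext hre him
  have hext : ∀ (φ : 𝓞 L →+* ZMod p) (b : ZMod p), b * b = φ α →
      ∃ ψ : 𝓞 M →+* ZMod p, (∀ a, ψ (algebraMap (𝓞 L) (𝓞 M) a) = φ a) ∧ ψ β = b := by
    intro φ b hb
    let _ : Algebra (𝓞 L) (ZMod p) := φ.toAlgebra
    have hφ : ∀ a : 𝓞 L, algebraMap (𝓞 L) (ZMod p) a = φ a := fun a => rfl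
    let j : QuadraticAlgebra (𝓞 L) α 0 →ₐ[𝓞 L] ZMod p :=
      QuadraticAlgebra.lift ⟨b, by rw [hb]; simp [Algebra.smul_def, hφ]⟩
    obtain ⟨ψ, hψ⟩ := hom_ext_away i.toRingHom hinj j.toRingHom (n : QuadraticAlgebra (𝓞 L) α 0)
      (by rw [map_intCast]; exact hpn) (by
        intro y
        obtain ⟨u, v, huv⟩ := hnM y
        refine ⟨1, ⟨u, v⟩, ?_⟩
        rw [pow_one, map_intCast, huv]
        exact (hi ⟨u, v⟩).symm)
    refine ⟨ψ, fun a => ?_, ?_⟩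
    · have := hψ (algebraMap _ _ a)
      have e1 : i.toRingHom (algebraMap _ _ a) = algebraMap (𝓞 L) (𝓞 M) a := i.commutes a
      have e2 : j.toRingHom (algebraMap _ _ a) = φ a := j.commutes a
      rwa [e1, e2] at this
    · have := hψ ⟨0, 1⟩
      have e1 : i.toRingHom ⟨0, 1⟩ = β := (hi ⟨0, 1⟩).trans (by simp)
      have e2 : j.toRingHom ⟨0, 1⟩ = b := by
        change j ⟨0, 1⟩ = b
        simp [j]
      rwa [e1, e2] at this
  choose r hr using fun φ : {φ : 𝓞 L →+* ZMod p // IsSquare (φ α)} => φ.2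
  have hr0 : ∀ φ, r φ ≠ 0 := by
    intro φ h
    have := hr φ
    rw [h, mul_zero] at this
    exact hpα _ this
  let b : {φ : 𝓞 L →+* ZMod p // IsSquare (φ α)} × Bool → ZMod p :=
    fun x => if x.2 then r x.1 else - r x.1
  have hb : ∀ x, b x * b x = x.1.1 α := by
    intro x
    simp only [b]
    split_ifs
    · exact (hr x.1).symm
    · rw [neg_mul_neg]; exact (hr x.1).symm
  choose Ψ hΨ1 hΨ2 using fun x => hext x.1.1 (b x) (hb x)
  have hΨinj : Function.Injective Ψ := by
    intro x y hxy
    have h1 : x.1 = y.1 := by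
      apply Subtype.ext
      ext a
      rw [← hΨ1 x, ← hΨ1 y, hxy]
    have h2 : b x = b y := by rw [← hΨ2 x, ← hΨ2 y, hxy]
    have h3 : r y.1 ≠ - r y.1 := by
      intro h
      have : 2 * r y.1 = 0 := by linear_combination h
      rcases mul_eq_zero.mp this with h | h
      · exact hp2 h
      · exact hr0 _ h
    obtain ⟨x1, x2⟩ := x
    obtain ⟨y1, y2⟩ := y
    simp only at h1
    subst h1
    cases x2 <;> cases y2
    · rfl
    · exact absurd h2.symm h3
    · exact absurd h2 h3
    · rfl
  have := Nat.card_le_card_of_injective Ψ hΨinj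
  rw [Nat.card_prod] at this
  simpa [mul_comm] using this

lemma numberField_of_finite (L M : Type*) [Field L] [NumberField L] [Field M] [Algebra L M]
    [Module.Finite L M] : NumberField M := by
  have : CharZero M := charZero_of_injective_algebraMap (algebraMap L M).injective
  have : IsScalarTower ℚ L M := IsScalarTower.of_algebraMap_eq' (Subsingleton.elim _ _)
  exact { to_charZero := inferInstance, to_finiteDimensional := Module.Finite.trans L M }

lemma exists_quad_ext.{u} {L : Type u} [Field L] (a : L) (ha : ¬ IsSquare a) :
    ∃ (M : Type u) (_ : Field M) (_ : Algebra L M) (_ : Module.Finite L M) (β : M),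
      β * β = algebraMap L M a ∧
      (∀ m : M, ∃ u v : L, m = algebraMap L M u + algebraMap L M v * β) ∧
      (∀ l : L, β ≠ algebraMap L M l) := by
  have : Fact (∀ r : L, r ^ 2 ≠ a + 0 * r) := ⟨fun r hr => ha ⟨r, by linear_combination -hr⟩⟩
  refine ⟨QuadraticAlgebra L a 0, inferInstance, inferInstance, inferInstance, ⟨0, 1⟩, ?_, ?_, ?_⟩
  · ext <;> simp
  · rintro ⟨u, v⟩
    refine ⟨u, v, ?_⟩
    ext <;> simp
  · intro l hl
    have := congrArg QuadraticAlgebra.im hl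
    simp at this

open Filter Topology in
open Classical in
lemma nonsq_not_summable (L : Type*) [Field L] [NumberField L] (α : 𝓞 L)
    (hα : ¬ IsSquare (α : L)) :
    ¬ Summable (fun p : Nat.Primes =>
      if (∃ φ : 𝓞 L →+* ZMod p, ¬ IsSquare (φ α)) then (1 : ℝ) / (p : ℕ) else 0) := by
  intro hsum
  obtain ⟨M, _, _, _, β, hβ, hgen, hns⟩ := exists_quad_ext (α : L) hα
  have : NumberField M := numberField_of_finite L M
  have hβi : IsIntegral ℤ β := by
    have h1 : IsIntegral ℤ (algebraMap L M (α : L)) := (RingOfIntegers.isIntegral_coe α).algebraMap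
    rw [← hβ, ← pow_two] at h1
    exact IsIntegral.of_pow two_pos h1
  have hα0 : α ≠ 0 := by
    rintro rfl
    exact hα (by simp)
  obtain ⟨N, hN0, hN⟩ := half_count L M α hα0 ⟨β, hβi⟩ (by
    apply RingOfIntegers.ext
    exact hβ) hgen hns
  set D : ℝ := ((Module.finrank ℤ (𝓞 L) + 1 : ℕ) : ℝ) ^ Module.finrank ℤ (𝓞 L) with hD
  have hD0 : 0 ≤ D := by positivity
  have haD : ∀ p : Nat.Primes, (aF L p : ℝ) ≤ D := by
    intro p
    have := aF_prime_pow_le L p.2 1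
    simp only [pow_one, one_mul] at this
    rw [hD]; exact_mod_cast this
  set bad : Nat.Primes → ℝ := fun p =>
      if (∃ φ : 𝓞 L →+* ZMod p, ¬ IsSquare (φ α)) then (1 : ℝ) / (p : ℕ) else 0 with hbad
  set dv : Nat.Primes → ℝ := fun p => if (p : ℕ) ∣ N then (1 : ℝ) / (p : ℕ) else 0 with hdv
  have hdvsum : Summable dv := by
    apply summable_of_hasFiniteSupport
    have hf : Set.Finite {p : Nat.Primes | (p : ℕ) ∣ N} := by
      refine Set.Finite.of_finite_image (f := fun p : Nat.Primes => (p : ℕ)) ?_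
        Subtype.val_injective.injOn
      refine (Set.finite_le_nat N).subset ?_
      rintro _ ⟨p, hp, rfl⟩
      exact Nat.le_of_dvd (Nat.pos_of_ne_zero hN0) hp
    refine hf.subset fun p hp => ?_
    by_contra h
    apply hp
    exact if_neg h
  have hbad0 : ∀ p, 0 ≤ bad p := fun p => by simp only [hbad]; split_ifs <;> positivity
  have hdv0 : ∀ p, 0 ≤ dv p := fun p => by simp only [hdv]; split_ifs <;> positivity
  have hpt : ∀ s : ℝ, 1 < s → ∀ p : Nat.Primes, (aF L p : ℝ) * ((p : ℕ) : ℝ) ^ (-s) ≤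
      (1 / 2) * ((aF M p : ℝ) * ((p : ℕ) : ℝ) ^ (-s)) + D * (bad p + dv p) := by
    intro s hs p
    have hp1 : (1 : ℝ) ≤ (p : ℕ) := by exact_mod_cast p.2.one_lt.le
    have hps : ((p : ℕ) : ℝ) ^ (-s) ≤ 1 / (p : ℕ) := by
      rw [one_div, ← Real.rpow_neg_one]
      exact Real.rpow_le_rpow_of_exponent_le hp1 (by linarith)
    have hps0 : 0 ≤ ((p : ℕ) : ℝ) ^ (-s) := by positivity
    have h1 : 0 ≤ (1 / 2) * ((aF M p : ℝ) * ((p : ℕ) : ℝ) ^ (-s)) := by positivity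
    have triv : (aF L p : ℝ) * ((p : ℕ) : ℝ) ^ (-s) ≤ D * (1 / (p : ℕ)) :=
      mul_le_mul (haD p) hps hps0 hD0
    by_cases hd : (p : ℕ) ∣ N
    · have : dv p = 1 / (p : ℕ) := if_pos hd
      have h2 := mul_nonneg hD0 (hbad0 p)
      rw [mul_add, this]; linarith
    by_cases hb : ∃ φ : 𝓞 L →+* ZMod p, ¬ IsSquare (φ α)
    · have : bad p = 1 / (p : ℕ) := if_pos hb
      have h2 := mul_nonneg hD0 (hdv0 p)
      rw [mul_add, this]; linarith
    · push Not at hb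
      have h3 := hN p p.2 hd
      rw [← (aF_eq_hom M p.2).1] at h3
      have h4 : Nat.card {φ : 𝓞 L →+* ZMod p // IsSquare (φ α)} = aF L p := by
        rw [(aF_eq_hom L p.2).1]
        exact Nat.card_congr (Equiv.subtypeUnivEquiv hb)
      rw [h4] at h3
      have h5 : 2 * (aF L p : ℝ) ≤ aF M p := by exact_mod_cast h3
      have h6 : 0 ≤ D * (bad p + dv p) := mul_nonneg hD0 (add_nonneg (hbad0 p) (hdv0 p))
      nlinarith
  obtain ⟨C1, hC1⟩ := prime_sum_bound L
  obtain ⟨C2, hC2⟩ := prime_sum_bound M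
  set E := ∑' p, D * (bad p + dv p) with hE
  have hlim : Tendsto (fun s : ℝ => Real.log (1 / (s - 1))) (𝓝[>] 1) atTop := by
    refine Real.tendsto_log_atTop.comp ?_
    simp only [one_div]
    refine tendsto_inv_nhdsGT_zero.comp ?_
    refine tendsto_nhdsWithin_iff.mpr ⟨?_, ?_⟩
    · refine Tendsto.mono_left ?_ nhdsWithin_le_nhds
      have : Tendsto (fun s : ℝ => s - 1) (𝓝 1) (𝓝 (1 - 1)) :=
        (continuous_id.sub continuous_const).tendsto 1
      simpa using this
    · filter_upwards [self_mem_nhdsWithin] with s hs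
      have hs : 1 < s := hs
      show 0 < s - 1
      linarith
  have hev := hlim.eventually (eventually_gt_atTop (2 * (C1 + C2 + E)))
  have hC2nn : ∀ᶠ s : ℝ in 𝓝[>] 1, 0 ≤ C2 := by
    filter_upwards [hC2] with s hs
    exact (abs_nonneg _).trans hs
  obtain ⟨s, h1, h2, h3, h4, h5⟩ :=
    (hev.and (hC1.and (hC2.and (hC2nn.and self_mem_nhdsWithin)))).exists
  have hs : 1 < s := h5
  have hsumE : Summable fun p => D * (bad p + dv p) := (hsum.add hdvsum).mul_left D
  have hle := Summable.tsum_le_tsum (hpt s hs) (aF_prime_summable L hs)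
    (((aF_prime_summable M hs).mul_left _).add hsumE)
  rw [Summable.tsum_add ((aF_prime_summable M hs).mul_left _) hsumE, tsum_mul_left] at hle
  have h2 := abs_le.mp h2
  have h3 := abs_le.mp h3
  linarith [h2.1, h3.2]

lemma fg_mod_squares (G : Type*) [CommGroup G] [Group.FG G] :
    ∃ R : Finset G, ∀ g : G, ∃ r ∈ R, ∃ w : G, g = r * w ^ 2 := by
  classical
  have hfin : Finite (G ⧸ (powMonoidHom 2 : G →* G).range) := by
    apply CommGroup.finite_of_fg_isMulTorsion
    intro x
    obtain ⟨g, rfl⟩ := QuotientGroup.mk_surjective x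
    rw [isOfFinOrder_iff_pow_eq_one]
    refine ⟨2, two_pos, ?_⟩
    rw [← QuotientGroup.mk_pow, QuotientGroup.eq_one_iff]
    exact ⟨g, rfl⟩
  have := Fintype.ofFinite (G ⧸ (powMonoidHom 2 : G →* G).range)
  refine ⟨Finset.univ.image (fun q : G ⧸ (powMonoidHom 2 : G →* G).range => q.out), fun g => ?_⟩
  refine ⟨(g : G ⧸ (powMonoidHom 2 : G →* G).range).out, by simp, ?_⟩
  obtain ⟨h, hh⟩ := QuotientGroup.mk_out_eq_mul (powMonoidHom 2 : G →* G).range g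
  obtain ⟨⟨_, w, rfl⟩, hw⟩ : ∃ h : (powMonoidHom 2 : G →* G).range,
    (g : G ⧸ (powMonoidHom 2 : G →* G).range).out = g * h := ⟨h, hh⟩
  refine ⟨w⁻¹, ?_⟩
  rw [hw]
  simp [mul_assoc]

lemma sunit_fg (K : Type*) [Field K] [NumberField K]
    (S : Finset (HeightOneSpectrum (𝓞 K))) : Group.FG ((S : Set (HeightOneSpectrum (𝓞 K))).unit K) := by
  classical
  set U := (S : Set (HeightOneSpectrum (𝓞 K))).unit K with hU
  let g0 : U →* (S → Multiplicative ℤ) :=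
    MonoidHom.pi fun v => (v.1.valuationOfNeZero (K := K)).comp U.subtype
  let e : Additive (S → Multiplicative ℤ) →+ (S → ℤ) :=
    { toFun := fun x v => Multiplicative.toAdd (x.toMul v)
      map_zero' := rfl
      map_add' := fun _ _ => rfl }
  let g : Additive U →ₗ[ℤ] (S → ℤ) := (e.comp (MonoidHom.toAdditive g0)).toIntLinearMap
  let j0 : (𝓞 K)ˣ →* U := (Units.map (algebraMap (𝓞 K) K : 𝓞 K →* K)).codRestrict U (by
    intro x v hv
    rw [← HeightOneSpectrum.valuationOfNeZero_eq, HeightOneSpectrum.valuation_of_unit_eq]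
    rfl)
  let j : Additive (𝓞 K)ˣ →ₗ[ℤ] Additive U := (MonoidHom.toAdditive j0).toIntLinearMap
  have hker : LinearMap.ker g ≤ LinearMap.range j := by
    intro x hx
    obtain ⟨x, rfl⟩ : ∃ y : U, Additive.ofMul y = x := ⟨x.toMul, rfl⟩
    have hval : ∀ v : HeightOneSpectrum (𝓞 K), v.valuation K (x : Kˣ) = 1 := by
      intro v
      by_cases hv : v ∈ S
      · have h1 := congrFun (LinearMap.mem_ker.mp hx) ⟨v, hv⟩
        have h2 : v.valuationOfNeZero (x : Kˣ) = 1 := h1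
        rw [← HeightOneSpectrum.valuationOfNeZero_eq, h2]; rfl
      · exact x.2 v hv
    obtain ⟨a, ha⟩ := HeightOneSpectrum.mem_integers_of_valuation_le_one K ((x : Kˣ) : K)
      (fun v => (hval v).le)
    obtain ⟨b, hb⟩ := HeightOneSpectrum.mem_integers_of_valuation_le_one K (((x : Kˣ)⁻¹ : Kˣ) : K)
      (fun v => by rw [Units.val_inv_eq_inv_val, map_inv₀, hval v, inv_one])
    have hab : a * b = 1 := by
      apply FaithfulSMul.algebraMap_injective (𝓞 K) K
      rw [map_mul, ha, hb, map_one, Units.mul_inv]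
    refine ⟨Additive.ofMul (Units.mkOfMulEqOne a b hab), ?_⟩
    apply congrArg Additive.ofMul
    apply Subtype.ext
    apply Units.ext
    exact ha
  have hfgker : (LinearMap.ker g).FG := by
    have h1 : IsNoetherian ℤ (LinearMap.range j) := inferInstance
    have h2 := (isNoetherian_submodule.mp h1) _ hker
    exact h2
  have : Module.Finite ℤ (Additive U) := by
    refine ⟨Submodule.fg_of_fg_map_of_fg_inf_ker g ?_ ?_⟩
    · exact IsNoetherian.noetherian _
    · rwa [top_inf_eq]
  rw [Module.Finite.iff_addGroup_fg] at this
  exact (GroupFG.iff_add_fg).mpr this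

lemma sint_denom (K : Type*) [Field K] [NumberField K]
    (S : Finset (HeightOneSpectrum (𝓞 K))) :
    ∃ N : ℕ, N ≠ 0 ∧ ∀ x : SInt K S, ∃ (k : ℕ) (a : 𝓞 K), (N : K) ^ k * (x : K) = (a : K) := by
  classical
  refine ⟨∏ v ∈ S, Ideal.absNorm v.asIdeal, ?_, ?_⟩
  · exact Finset.prod_ne_zero_iff.mpr fun v _ h => v.ne_bot (Ideal.absNorm_eq_zero_iff.mp h)
  intro x
  set N := ∏ v ∈ S, Ideal.absNorm v.asIdeal with hN
  have hNint : ∀ v : HeightOneSpectrum (𝓞 K), v.valuation K (N : K) ≤ 1 := by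
    intro v
    have := v.valuation_le_one (K := K) (N : 𝓞 K)
    simpa using this
  have hNS : ∀ v ∈ S, v.valuation K (N : K) < 1 := by
    intro v hv
    have h1 : (N : 𝓞 K) ∈ v.asIdeal := by
      obtain ⟨m, hm⟩ := Finset.dvd_prod_of_mem (fun v => Ideal.absNorm v.asIdeal) hv
      rw [hN, hm, Nat.cast_mul]
      exact Ideal.mul_mem_right _ _ (Ideal.absNorm_mem _)
    have := (v.valuation_lt_one_iff_mem (K := K) (N : 𝓞 K)).mpr h1
    simpa using this
  have hk : ∀ v : HeightOneSpectrum (𝓞 K), ∃ k : ℕ, v ∈ S →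
      v.valuation K (N : K) ^ k * v.valuation K (x : K) ≤ 1 := by
    intro v
    by_cases hv : v ∈ S
    · by_cases hx : v.valuation K (x : K) = 0
      · exact ⟨0, fun _ => by simp [hx]⟩
      · obtain ⟨k, hk⟩ := exists_pow_lt₀ (hNS v hv) (Units.mk0 _ (inv_ne_zero hx))
        refine ⟨k, fun _ => ?_⟩
        have := mul_le_mul_left hk.le (v.valuation K (x : K))
        simpa [hx] using this
    · exact ⟨0, fun h => absurd h hv⟩
  choose k hk using hk
  obtain ⟨a, ha⟩ := HeightOneSpectrum.mem_integers_of_valuation_le_one K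
    ((N : K) ^ (∑ v ∈ S, k v) * (x : K)) (by
      intro v
      rw [map_mul, map_pow]
      by_cases hv : v ∈ S
      · refine le_trans (mul_le_mul_left ?_ _) (hk v hv)
        exact pow_le_pow_right_of_le_one' (hNint v) (Finset.single_le_sum (fun _ _ => Nat.zero_le _) hv)
      · refine mul_le_one' (pow_le_one' (hNint v) _) ?_
        exact x.2 v hv)
  exact ⟨_, a, ha.symm⟩

lemma density_biUnion_le {R : Type*} (δ : Set R → ℝ) 
    (hδunion : ∀ P Q, δ (P ∪ Q) ≤ δ P + δ Q) {ι : Type*} (s : Finset ι) (hs : s.Nonempty)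
    (P : ι → Set R) : δ (⋃ i ∈ s, P i) ≤ ∑ i ∈ s, δ (P i) := by
  classical
  induction hs using Finset.Nonempty.cons_induction with
  | singleton a => simp
  | cons a s h hs ih =>
    rw [Finset.sum_cons, Finset.cons_eq_insert, Finset.set_biUnion_insert]
    exact (hδunion _ _).trans (by gcongr)

lemma sieve_bound {R : Type*} [CommRing R] [CharZero R] (δ : Set R → ℝ)
    (hδmono : ∀ P Q, P ⊆ Q → δ P ≤ δ Q)
    (hδunion : ∀ P Q, δ (P ∪ Q) ≤ δ P + δ Q)
    (hδtrans : ∀ (α : R) (P : Set R), δ ((α + ·) '' P) = δ P)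
    (hδideal : ∀ I : Ideal R, I ≠ ⊥ → δ (I : Set R) = 1 / (Nat.card (R ⧸ I) : ℝ))
    (T : Set R) (Q : Finset Nat.Primes)
    (h : ∀ p ∈ Q, ∃ (ψ : R →+* ZMod p) (r : ZMod p), ∀ n ∈ T, ψ n ≠ r) :
    δ T ≤ ∏ p ∈ Q, (1 - 1 / ((p : ℕ) : ℝ)) := by
  classical
  have h' : ∀ p : Q, ∃ (ψ : R →+* ZMod p) (r : ZMod p), ∀ n ∈ T, ψ n ≠ r := fun p => h p.1 p.2
  choose ψ r hr using h'
  have hfact : ∀ p : Q, NeZero ((p : Nat.Primes) : ℕ) := fun p => ⟨p.1.2.ne_zero⟩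
  let Φ : R →+* (∀ p : Q, ZMod p) := RingHom.pi ψ
  have hcop : Pairwise (Function.onFun Nat.Coprime (fun p : Q => ((p : Nat.Primes) : ℕ))) := by
    intro p q hpq
    refine (Nat.coprime_primes p.1.2 q.1.2).mpr fun h => hpq ?_
    exact Subtype.ext (Subtype.ext h)
  let e := ZMod.prodEquivPi (fun p : Q => ((p : Nat.Primes) : ℕ)) hcop
  have hΦ : Function.Surjective Φ := by
    intro y
    obtain ⟨k, hk⟩ := ZMod.intCast_surjective (e.symm y)
    refine ⟨(k : R), ?_⟩
    rw [map_intCast, ← map_intCast e, hk, e.apply_symm_apply]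
  set I := RingHom.ker Φ with hI
  have hcard : Nat.card (R ⧸ I) = ∏ p ∈ Q, (p : ℕ) := by
    rw [Nat.card_congr (RingHom.quotientKerEquivOfSurjective hΦ).toEquiv, Nat.card_pi]
    simp only [Nat.card_zmod]
    exact Finset.prod_coe_sort Q (fun p => (p : ℕ))
  have hprod0 : ∏ p ∈ Q, (p : ℕ) ≠ 0 := Finset.prod_ne_zero_iff.mpr fun p _ => p.2.ne_zero
  have hI0 : I ≠ ⊥ := by
    intro hb
    have h1 : ((∏ p ∈ Q, (p : ℕ) : ℕ) : R) ∈ I := by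
      rw [hI, RingHom.mem_ker, map_natCast]
      funext p
      rw [Pi.natCast_apply, Pi.zero_apply, ZMod.natCast_eq_zero_iff]
      exact Finset.dvd_prod_of_mem (fun p : Nat.Primes => (p : ℕ)) p.2
    rw [hb, Ideal.mem_bot] at h1
    exact hprod0 (by exact_mod_cast h1)
  choose sec hsec using hΦ
  let W : Finset (∀ p : Q, ZMod p) := Fintype.piFinset fun p => Finset.univ.erase (r p)
  have hWcard : W.card = ∏ p ∈ Q, ((p : ℕ) - 1) := by
    rw [Fintype.card_piFinset]
    simp only [Finset.card_erase_of_mem (Finset.mem_univ _), Finset.card_univ, ZMod.card]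
    exact Finset.prod_coe_sort Q (fun p => (p : ℕ) - 1)
  have hWne : W.Nonempty := by
    rw [← Finset.card_pos, hWcard]
    exact Finset.prod_pos fun p _ => Nat.sub_pos_of_lt p.2.one_lt
  have hsub : T ⊆ ⋃ y ∈ W, (sec y + ·) '' (I : Set R) := by
    intro n hn
    rw [Set.mem_iUnion₂]
    refine ⟨Φ n, ?_, n - sec (Φ n), ?_, by simp⟩
    · rw [Fintype.mem_piFinset]
      intro p
      rw [Finset.mem_erase]
      exact ⟨hr p n hn, Finset.mem_univ _⟩
    · rw [SetLike.mem_coe, hI, RingHom.mem_ker, map_sub, hsec, sub_self]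
  calc δ T ≤ _ := hδmono _ _ hsub
    _ ≤ _ := density_biUnion_le δ hδunion W hWne _
    _ = (W.card : ℝ) * (1 / ((∏ p ∈ Q, (p : ℕ) : ℕ) : ℝ)) := by
      simp only [hδtrans]
      rw [hδideal I hI0, hcard, Finset.sum_const, nsmul_eq_mul]
    _ = _ := by
      rw [hWcard, Nat.cast_prod, Nat.cast_prod, mul_one_div, ← Finset.prod_div_distrib]
      refine Finset.prod_congr rfl fun p _ => ?_
      have : ((p : ℕ) : ℝ) ≠ 0 := by exact_mod_cast p.2.ne_zero
      rw [Nat.cast_sub p.2.one_lt.le]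
      field_simp
      simp

open Classical in
lemma sieve_zero {R : Type*} [CommRing R] [CharZero R] (δ : Set R → ℝ)
    (hδ0 : ∀ P, 0 ≤ δ P)
    (hδmono : ∀ P Q, P ⊆ Q → δ P ≤ δ Q)
    (hδunion : ∀ P Q, δ (P ∪ Q) ≤ δ P + δ Q)
    (hδtrans : ∀ (α : R) (P : Set R), δ ((α + ·) '' P) = δ P)
    (hδideal : ∀ I : Ideal R, I ≠ ⊥ → δ (I : Set R) = 1 / (Nat.card (R ⧸ I) : ℝ))
    (T : Set R) (N : ℕ) (hN : N ≠ 0) (bad : Nat.Primes → Prop)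
    (hns : ¬ Summable (fun p : Nat.Primes => if bad p then (1 : ℝ) / (p : ℕ) else 0))
    (h : ∀ p : Nat.Primes, ¬ (p : ℕ) ∣ N → bad p →
      ∃ (ψ : R →+* ZMod p) (r : ZMod p), ∀ n ∈ T, ψ n ≠ r) :
    δ T = 0 := by
  by_contra hT
  have hpos : 0 < δ T := lt_of_le_of_ne (hδ0 T) (Ne.symm hT)
  apply hns
  set dv : Nat.Primes → ℝ := fun p => if (p : ℕ) ∣ N then (1 : ℝ) / (p : ℕ) else 0 with hdv
  have hdvsum : Summable dv := by
    apply summable_of_hasFiniteSupport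
    have hf : Set.Finite {p : Nat.Primes | (p : ℕ) ∣ N} := by
      refine Set.Finite.of_finite_image (f := fun p : Nat.Primes => (p : ℕ)) ?_
        Subtype.val_injective.injOn
      refine (Set.finite_le_nat N).subset ?_
      rintro _ ⟨p, hp, rfl⟩
      exact Nat.le_of_dvd (Nat.pos_of_ne_zero hN) hp
    refine hf.subset fun p hp => ?_
    by_contra h
    apply hp
    exact if_neg h
  set ob : Nat.Primes → Prop := fun p =>
    ∃ (ψ : R →+* ZMod p) (r : ZMod p), ∀ n ∈ T, ψ n ≠ r with hob
  have hobsum : Summable (fun p : Nat.Primes => if ob p then (1 : ℝ) / (p : ℕ) else 0) := by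
    refine summable_of_sum_le (c := - Real.log (δ T)) (fun p => ?_) (fun u => ?_)
    · dsimp only; split_ifs <;> positivity
    · have h1 := sieve_bound δ hδmono hδunion hδtrans hδideal T (u.filter ob)
        (fun p hp => (Finset.mem_filter.mp hp).2)
      have h2 : ∏ p ∈ u.filter ob, (1 - 1 / ((p : ℕ) : ℝ)) ≤
          ∏ p ∈ u.filter ob, Real.exp (-(1 / ((p : ℕ) : ℝ))) := by
        refine Finset.prod_le_prod (fun p _ => ?_) (fun p _ => ?_)
        · have : (1 : ℝ) ≤ (p : ℕ) := by exact_mod_cast p.2.one_lt.le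
          rw [sub_nonneg]
          exact (div_le_one (by positivity)).mpr this
        · have := Real.add_one_le_exp (-(1 / ((p : ℕ) : ℝ)))
          linarith
      rw [← Real.exp_sum, Finset.sum_neg_distrib] at h2
      have h3 := Real.log_le_log hpos (h1.trans h2)
      rw [Real.log_exp] at h3
      rw [← Finset.sum_filter]
      linarith
  refine Summable.of_nonneg_of_le (fun p => ?_) (fun p => ?_) (hdvsum.add hobsum)
  · split_ifs <;> positivity
  · have hp0 : (0 : ℝ) ≤ 1 / (p : ℕ) := by positivity
    by_cases hb : bad p
    · rw [if_pos hb]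
      by_cases hd : (p : ℕ) ∣ N
      · simp only [hdv, if_pos hd]
        split_ifs <;> linarith
      · have : ob p := h p hd hb
        simp only [hdv, if_neg hd, if_pos this]
        linarith
    · rw [if_neg hb]
      simp only [hdv]
      split_ifs <;> linarith

lemma genus_local_global {K : Type*} [Field K] (F A : K[X]) (hF : Squarefree F) (ε : K)
    (h : ∀ g : K[X], Irreducible g → g ∣ F → ∃ q : K[X], g ∣ A - Polynomial.C ε * q ^ 2) :
    ∃ p : K[X], F ∣ A - Polynomial.C ε * p ^ 2 := by
  suffices H : ∀ G : K[X], G ∣ F → ∃ p : K[X], G ∣ A - Polynomial.C ε * p ^ 2 from H F dvd_rfl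
  intro G
  induction G using UniqueFactorizationMonoid.induction_on_coprime with
  | h0 =>
    intro h0
    exact absurd (zero_dvd_iff.mp h0) hF.ne_zero
  | h1 hx => exact fun _ => ⟨0, hx.dvd⟩
  | @hpr g i hp =>
    intro hd
    by_cases hi : i = 0
    · subst hi; exact ⟨0, by simp⟩
    have hi1 : i ≤ 1 := by
      by_contra hi2
      have : g * g ∣ F := (by rw [← pow_two]; exact pow_dvd_pow g (by omega : 2 ≤ i) : g * g ∣ g ^ i).trans hd
      exact hp.not_isUnit (hF g this)
    obtain rfl : i = 1 := by omega
    rw [pow_one] at hd ⊢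
    exact h g hp.irreducible hd
  | @hcp x y hxy hx hy =>
    intro hd
    obtain ⟨p, hp⟩ := hx ((Dvd.intro _ rfl).trans hd)
    obtain ⟨q, hq⟩ := hy ((Dvd.intro_left _ rfl).trans hd)
    obtain ⟨a, b, hab⟩ := hxy.isCoprime
    refine ⟨p * (b * y) + q * (a * x), ?_⟩
    have hc : IsCoprime x y := ⟨a, b, hab⟩
    refine hc.mul_dvd ?_ ?_
    · obtain ⟨c, hc⟩ := hp
      refine ⟨c - Polynomial.C ε * (a * (q - p)) * (2 * p + x * (a * (q - p))), ?_⟩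
      have : b * y = 1 - a * x := by linear_combination hab
      rw [this]
      linear_combination hc
    · obtain ⟨c, hc⟩ := hq
      refine ⟨c - Polynomial.C ε * (b * (p - q)) * (2 * q + y * (b * (p - q))), ?_⟩
      have : a * x = 1 - b * y := by linear_combination hab
      rw [this]
      linear_combination hc

lemma squarefree_map (K : Type*) [Field K] [NumberField K] (f : (𝓞 K)[X]) (hm : f.Monic)
    (hs : Squarefree f) : Squarefree (f.map (algebraMap (𝓞 K) K)) := by
  intro g hg
  have hfm := hm.map (algebraMap (𝓞 K) K)
  have hgd : g ∣ f.map (algebraMap (𝓞 K) K) := (Dvd.intro _ rfl).trans hg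
  have hg0 : g ≠ 0 := by
    rintro rfl
    exact hfm.ne_zero (zero_dvd_iff.mp hgd)
  obtain ⟨g', hg'⟩ := IsIntegrallyClosed.eq_map_mul_C_of_dvd K hm hgd
  have hlc : IsUnit (Polynomial.C g.leadingCoeff) :=
    Polynomial.isUnit_C.mpr (IsUnit.mk0 _ (leadingCoeff_ne_zero.mpr hg0))
  have hm1 : (g'.map (algebraMap (𝓞 K) K)).Monic := by
    have hl0 := leadingCoeff_ne_zero.mpr hg0
    generalize hl : g.leadingCoeff = l at hg' hl0
    have h1 : (g'.map (algebraMap (𝓞 K) K)) = g * C g.leadingCoeff⁻¹ := by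
      rw [hl, ← hg', mul_assoc, ← C_mul, mul_inv_cancel₀ hl0]
      simp
    rw [h1]
    exact monic_mul_leadingCoeff_inv hg0
  have hm' : g'.Monic :=
    Polynomial.monic_of_injective (FaithfulSMul.algebraMap_injective (𝓞 K) K) hm1
  have h2 : (g' * g').map (algebraMap (𝓞 K) K) ∣ f.map (algebraMap (𝓞 K) K) := by
    rw [Polynomial.map_mul]
    refine dvd_trans (mul_dvd_mul ?_ ?_) hg <;> exact Dvd.intro _ hg'
  have h3 : g' * g' ∣ f :=
    Polynomial.map_dvd_map _ (FaithfulSMul.algebraMap_injective (𝓞 K) K) (hm'.mul hm') |>.mp h2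
  have h4 := hs g' h3
  rw [← hg']
  exact (h4.map (Polynomial.mapRingHom (algebraMap (𝓞 K) K))).mul hlc

lemma local_obstruction (K : Type*) [Field K] [NumberField K]
    (S : Finset (HeightOneSpectrum (𝓞 K))) (L : Type*) [Field L] [NumberField L] [Algebra K L]
    (N : ℕ) (hN0 : N ≠ 0)
    (hN : ∀ x : SInt K S, ∃ (k : ℕ) (a : 𝓞 K), (N : K) ^ k * (x : K) = (a : K))
    (f : (𝓞 K)[X]) (hf : f.Monic) (A : (SInt K S)[X]) (u : SInt K S) (θ : L)
    (hθ : f.eval₂ ((algebraMap K L).comp (algebraMap (𝓞 K) K)) θ = 0)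
    (hns : ¬ IsSquare (algebraMap K L (u : K) *
      A.eval₂ ((algebraMap K L).comp (algebraMap (SInt K S) K)) θ)) :
    ∃ α : 𝓞 L, ¬ IsSquare (α : L) ∧ ∀ p : Nat.Primes, ¬ (p : ℕ) ∣ N →
      (∃ φ : 𝓞 L →+* ZMod p, ¬ IsSquare (φ α)) →
      ∃ (ψ : SInt K S →+* ZMod p) (r : ZMod p),
        f.eval₂ (ψ.comp (algebraMap (𝓞 K) (SInt K S))) r = 0 ∧
        ¬ IsSquare (ψ u * A.eval₂ ψ r) := by
  classical
  have hNL : (N : L) ≠ 0 := by exact_mod_cast hN0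
  let T : Subring L :=
    { carrier := {y | ∃ (k : ℕ) (a : 𝓞 L), (N : L) ^ k * y = algebraMap (𝓞 L) L a}
      mul_mem' := by
        rintro x y ⟨k, a, ha⟩ ⟨l, b, hb⟩
        refine ⟨k + l, a * b, ?_⟩
        simp only [map_mul, map_add, map_neg, map_pow, map_natCast]
        rw [← ha, ← hb]; ring
      one_mem' := ⟨0, 1, by simp⟩
      add_mem' := by
        rintro x y ⟨k, a, ha⟩ ⟨l, b, hb⟩
        refine ⟨k + l, (N : 𝓞 L) ^ l * a + (N : 𝓞 L) ^ k * b, ?_⟩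
        simp only [map_mul, map_add, map_neg, map_pow, map_natCast]
        rw [← ha, ← hb]; ring
      zero_mem' := ⟨0, 0, by simp⟩
      neg_mem' := by
        rintro x ⟨k, a, ha⟩
        refine ⟨k, -a, ?_⟩
        simp only [map_mul, map_add, map_neg, map_pow, map_natCast]
        rw [← ha]; ring }
  have hIntg : ∀ a : 𝓞 K, IsIntegral ℤ (algebraMap K L (a : K)) := fun a =>
    (RingOfIntegers.isIntegral_coe a).algebraMap
  let i : 𝓞 L →+* T := (algebraMap (𝓞 L) L).codRestrict T (fun a => ⟨0, a, by simp⟩)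
  have hi : Function.Injective i := fun a b hab => by
    have := congrArg (Subtype.val) hab
    exact RingOfIntegers.ext this
  let ι : SInt K S →+* T := ((algebraMap K L).comp (algebraMap (SInt K S) K)).codRestrict T (by
    intro x
    obtain ⟨k, a, ha⟩ := hN x
    refine ⟨k, ⟨_, hIntg a⟩, ?_⟩
    have := congrArg (algebraMap K L) ha
    rw [map_mul, map_pow, map_natCast] at this
    exact this)
  have hθi : IsIntegral ℤ θ := by
    have h1 : IsIntegral (𝓞 K) θ := ⟨f, hf, by
      rw [← hθ]; congr 1⟩
    exact isIntegral_trans θ h1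
  let t : T := ⟨θ, 0, ⟨θ, hθi⟩, by rw [pow_zero, one_mul]; rfl⟩
  let β : T := ι u * A.eval₂ ι t
  have hβ : (β : L) = algebraMap K L (u : K) *
      A.eval₂ ((algebraMap K L).comp (algebraMap (SInt K S) K)) θ := by
    have h1 := Polynomial.hom_eval₂ A ι T.subtype t
    have h2 : (β : L) = T.subtype (ι u) * T.subtype (A.eval₂ ι t) := rfl
    rw [h2, h1]; rfl
  obtain ⟨k, a, ha⟩ := β.2
  have hia : (i N : T) ^ k * β = i a := by
    apply Subtype.ext
    rw [← show ((N : L) ^ k * (β : L)) = ((i a : T) : L) from ha]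
    simp
  refine ⟨(N : 𝓞 L) ^ k * a, ?_, ?_⟩
  · rintro ⟨s, hs⟩
    apply hns
    rw [← hβ]
    refine ⟨s / (N : L) ^ k, ?_⟩
    have hs : algebraMap (𝓞 L) L ((N : 𝓞 L) ^ k * a) = s * s := hs
    rw [map_mul, map_pow, map_natCast, ← ha] at hs
    field_simp
    linear_combination hs
  · rintro p hp ⟨φ, hφ⟩
    have : Fact (p : ℕ).Prime := ⟨p.2⟩
    obtain ⟨Ψ, hΨ⟩ := hom_ext_away i hi φ (N : 𝓞 L) (by
      rw [map_natCast, Ne, ZMod.natCast_eq_zero_iff]; exact hp) (by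
      rintro ⟨y, k, a, ha⟩
      refine ⟨k, a, Subtype.ext ?_⟩
      rw [← show ((N : L) ^ k * y) = ((i a : T) : L) from ha]
      simp)
    refine ⟨Ψ.comp ι, Ψ t, ?_, ?_⟩
    · have h1 := Polynomial.hom_eval₂ f (ι.comp (algebraMap (𝓞 K) (SInt K S))) Ψ t
      have h2 : f.eval₂ (ι.comp (algebraMap (𝓞 K) (SInt K S))) t = 0 := by
        apply Subtype.ext
        have h3 := Polynomial.hom_eval₂ f (ι.comp (algebraMap (𝓞 K) (SInt K S))) T.subtype t
        exact h3.trans hθ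
      rw [h2, map_zero] at h1
      exact h1.symm
    · have h1 : Ψ β = (Ψ.comp ι) u * A.eval₂ (Ψ.comp ι) (Ψ t) := by
        rw [map_mul, Polynomial.hom_eval₂]; rfl
      rw [← h1]
      rintro ⟨s, hs⟩
      apply hφ
      refine ⟨φ N ^ k * s, ?_⟩
      have h2 := congrArg Ψ hia
      rw [map_mul, map_pow, hΨ, hΨ, hs] at h2
      rw [map_mul, map_pow, ← h2]
      ring


lemma unit_class_density_zero (K : Type*) [Field K] [NumberField K]
    (S : Finset (HeightOneSpectrum (𝓞 K)))
    (f : Polynomial (𝓞 K)) (hmonic : f.Monic) (hsqfree : Squarefree f)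
    (δ : Set (SInt K S) → ℝ) (hδ0 : ∀ P, 0 ≤ δ P)
    (hδmono : ∀ P Q, P ⊆ Q → δ P ≤ δ Q)
    (hδunion : ∀ P Q, δ (P ∪ Q) ≤ δ P + δ Q)
    (hδtrans : ∀ (α : SInt K S) (P : Set (SInt K S)), δ ((α + ·) '' P) = δ P)
    (hδideal : ∀ I : Ideal (SInt K S), I ≠ ⊥ →
        δ (I : Set (SInt K S)) = 1 / (Nat.card (SInt K S ⧸ I) : ℝ))
    (A : Polynomial (SInt K S))
    (hgenus : ¬ ∃ ε : K, ε ≠ 0 ∧ ∃ p : K[X],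
        (f.map (algebraMap (𝓞 K) K)) ∣
          (A.map (algebraMap (SInt K S) K) - Polynomial.C ε * p ^ 2))
    (u : (SInt K S)ˣ) :
    δ {n : SInt K S | ∃ a c : SInt K S, (u : SInt K S) * A.eval n =
      a ^ 2 - (f.map (algebraMap (𝓞 K) (SInt K S))).eval n * c ^ 2} = 0 := by
  classical
  have hu0 : ((u : SInt K S) : K) ≠ 0 := fun h => u.ne_zero (Subtype.ext h)
  obtain ⟨g, hg, hgf, hgA⟩ : ∃ g : K[X], Irreducible g ∧ g ∣ f.map (algebraMap (𝓞 K) K) ∧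
      ∀ q : K[X], ¬ g ∣ A.map (algebraMap (SInt K S) K) -
        Polynomial.C ((u : SInt K S) : K)⁻¹ * q ^ 2 := by
    by_contra hcon
    push Not at hcon
    exact hgenus ⟨((u : SInt K S) : K)⁻¹, inv_ne_zero hu0,
      genus_local_global _ _ (squarefree_map K f hmonic hsqfree) _ hcon⟩
  have : Fact (Irreducible g) := ⟨hg⟩
  have hfin : Module.Finite K (AdjoinRoot g) := (AdjoinRoot.powerBasis hg.ne_zero).finite
  have : NumberField (AdjoinRoot g) := numberField_of_finite K (AdjoinRoot g)
  obtain ⟨N, hN0, hN⟩ := sint_denom K S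
  obtain ⟨α, hα, hob⟩ := local_obstruction K S (AdjoinRoot g) N hN0 hN f hmonic A u
    (AdjoinRoot.root g) (by
      rw [← Polynomial.eval₂_map]
      obtain ⟨h, hh⟩ := hgf
      rw [hh, Polynomial.eval₂_mul, AdjoinRoot.algebraMap_eq, AdjoinRoot.eval₂_root, zero_mul])
    (by
      rintro ⟨s, hs⟩
      obtain ⟨q, rfl⟩ := AdjoinRoot.mk_surjective s
      apply hgA q
      rw [← Polynomial.eval₂_map, ← Polynomial.aeval_def, AdjoinRoot.aeval_eq, AdjoinRoot.algebraMap_eq] at hs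
      have h1 : AdjoinRoot.mk g (Polynomial.C ((u : SInt K S) : K) *
          A.map (algebraMap (SInt K S) K) - q * q) = 0 := by
        rw [map_sub, map_mul, map_mul, ← hs, AdjoinRoot.mk_C, sub_self]
      rw [AdjoinRoot.mk_eq_zero] at h1
      have h2 := Dvd.dvd.mul_left h1 (Polynomial.C ((u : SInt K S) : K)⁻¹)
      have h3 : Polynomial.C ((u : SInt K S) : K)⁻¹ * Polynomial.C ((u : SInt K S) : K) = 1 := by
        rw [← Polynomial.C_mul, inv_mul_cancel₀ hu0, Polynomial.C_1]
      convert h2 using 1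
      linear_combination (-A.map (algebraMap (SInt K S) K)) * h3)
  refine sieve_zero δ hδ0 hδmono hδunion hδtrans hδideal _ N hN0 _
    (nonsq_not_summable (AdjoinRoot g) α hα) ?_
  intro p hp hbad
  obtain ⟨ψ, r, hfr, hns⟩ := hob p hp hbad
  refine ⟨ψ, r, ?_⟩
  rintro n ⟨a, c, hac⟩ rfl
  apply hns
  have h1 := congrArg ψ hac
  rw [map_mul, map_sub, map_mul, map_pow, map_pow, Polynomial.eval_map] at h1
  have h2 := Polynomial.hom_eval₂ f (algebraMap (𝓞 K) (SInt K S)) ψ n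
  have h3 := Polynomial.hom_eval₂ A (RingHom.id _) ψ n
  rw [RingHom.comp_id] at h3
  rw [h2, hfr, zero_mul, sub_zero] at h1
  refine ⟨ψ a, ?_⟩
  rw [← h3, ← pow_two, ← h1]
  rfl

/-- **Trivial specializations have density 0.**
`K` a number field, `f ∈ O_K[X]` monic squarefree of odd degree `≥ 3`, `S` a
finite set of primes with `O = O_{K,S}` a PID, `δ` a density on `O` (a
subadditive, monotone, translation-invariant `[0,1]`-valued set function with
`δ(O) = 1` and `δ(I) = 1/N(I)` for nonzero ideals `I`). If `[A,2B,C]` is a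
primitive form over `O[X]` with `B² − AC = f`, `A` coprime to `f` in `K[X]`,
and not in the principal genus over `K[X]` (no `ε ∈ Kˣ`, `p ∈ K[X]` satisfy
`f ∣ A − ε·p²`), then the set of `n ∈ O` for which `[A(n), 2B(n), C(n)]` is
`GL₂ᵗʷ`-equivalent over `O` to the principal form `[1, 0, −f(n)]` has density
`0`. -/
theorem trivial_specializations_density_zero
    (K : Type*) [Field K] [NumberField K]
    (S : Finset (HeightOneSpectrum (𝓞 K)))
    (hPID : IsPrincipalIdealRing (SInt K S))
    (f : Polynomial (𝓞 K)) (hmonic : f.Monic) (hsqfree : Squarefree f)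
    (hodd : Odd f.natDegree) (hdeg : 3 ≤ f.natDegree)
    (δ : Set (SInt K S) → ℝ)
    (hδ01 : ∀ P, 0 ≤ δ P ∧ δ P ≤ 1)
    (hδuniv : δ Set.univ = 1)
    (hδmono : ∀ P Q, P ⊆ Q → δ P ≤ δ Q)
    (hδunion : ∀ P Q, δ (P ∪ Q) ≤ δ P + δ Q)
    (hδtrans : ∀ (α : SInt K S) (P : Set (SInt K S)), δ ((α + ·) '' P) = δ P)
    (hδideal : ∀ I : Ideal (SInt K S), I ≠ ⊥ →
        δ (I : Set (SInt K S)) = 1 / (Nat.card (SInt K S ⧸ I) : ℝ))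
    (A B C : Polynomial (SInt K S))
    (hrel : B ^ 2 - A * C = f.map (algebraMap (𝓞 K) (SInt K S)))
    (hprim : Ideal.span {A, 2 * B, C} = (⊤ : Ideal (Polynomial (SInt K S))))
    (hcop : IsCoprime (A.map (algebraMap (SInt K S) K)) (f.map (algebraMap (𝓞 K) K)))
    (hgenus : ¬ ∃ ε : K, ε ≠ 0 ∧ ∃ p : K[X],
        (f.map (algebraMap (𝓞 K) K)) ∣
          (A.map (algebraMap (SInt K S) K) - Polynomial.C ε * p ^ 2)) :
    δ {n : SInt K S |
      ∃ M : Matrix (Fin 2) (Fin 2) (SInt K S), IsUnit M.det ∧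
        ∀ x y : SInt K S,
          M.det * (A.eval n * x ^ 2 + 2 * B.eval n * x * y + C.eval n * y ^ 2) =
            (M 0 0 * x + M 0 1 * y) ^ 2
              - (f.map (algebraMap (𝓞 K) (SInt K S))).eval n
                * (M 1 0 * x + M 1 1 * y) ^ 2} = 0 := by
  obtain ⟨R0, hR0⟩ := @fg_mod_squares ((S : Set (HeightOneSpectrum (𝓞 K))).unit K) _ (sunit_fg K S)
  let eU := (S : Set (HeightOneSpectrum (𝓞 K))).unitEquivUnitsInteger K
  have hR0ne : R0.Nonempty := by
    obtain ⟨r, hr, _⟩ := hR0 1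
    exact ⟨r, hr⟩
  let T : (S : Set (HeightOneSpectrum (𝓞 K))).unit K → Set (SInt K S) := fun r =>
    {n | ∃ a c : SInt K S, (eU r : SInt K S) * A.eval n =
      a ^ 2 - (f.map (algebraMap (𝓞 K) (SInt K S))).eval n * c ^ 2}
  have hT : ∀ r, δ (T r) = 0 := fun r =>
    unit_class_density_zero K S f hmonic hsqfree δ (fun P => (hδ01 P).1) hδmono hδunion hδtrans
      hδideal A hgenus (eU r)
  refine le_antisymm ?_ (hδ01 _).1
  calc _ ≤ δ (⋃ r ∈ R0, T r) := hδmono _ _ ?_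
    _ ≤ _ := density_biUnion_le δ hδunion R0 hR0ne T
    _ = 0 := by simp [hT]
  rintro n ⟨M, hM, h⟩
  obtain ⟨d, hd⟩ := hM
  obtain ⟨r, hr, w, hw⟩ := hR0 (eU.symm d)
  rw [Set.mem_iUnion₂]
  have hd2 : d = eU r * eU w ^ 2 := by
    rw [← map_pow, ← map_mul, ← hw, MulEquiv.apply_symm_apply]
  refine ⟨r, hr, M 0 0 * ((eU w)⁻¹ : (SInt K S)ˣ), M 1 0 * ((eU w)⁻¹ : (SInt K S)ˣ), ?_⟩
  have h1 := h 1 0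
  rw [← hd, hd2] at h1
  have hwi : ((eU w : (SInt K S)ˣ) : SInt K S) * (((eU w)⁻¹ : (SInt K S)ˣ) : SInt K S) = 1 :=
    Units.mul_inv _
  push_cast at h1
  generalize (((eU w)⁻¹ : (SInt K S)ˣ) : SInt K S) = v at hwi ⊢
  generalize ((eU w : (SInt K S)ˣ) : SInt K S) = z at hwi h1
  generalize ((eU r : (SInt K S)ˣ) : SInt K S) = q at h1 ⊢
  linear_combination v ^ 2 * h1 - q * A.eval n * (z * v + 1) * hwi
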